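/- arXiv:2605.29474 — 3 statements merged into one kernel-verified Lean document; each statement's English description precedes it below -/
import Mathlib

section
/- Let d ≥ 1, let f : ℝ → ℝ^d, and let θ₀ ∈ (0, 2π). Suppose f(θ) tends to a limit A as θ → θ₀ from the left and to a limit B as θ → θ₀ from the right, with A ≠ B (a jump discontinuity). Then the Gagliardo H^{1/2} double integral ∫₀^{2π} ∫₀^{2π} ‖f(θ₁) − f(θ₂)‖² / |θ₁ − θ₂|² dθ₁ dθ₂, taken as a Lebesgue integral with values in [0, ∞], is infinite. -/
open Real Set Filter MeasureTheory

/-!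
Near a jump at `t` the increments `dist (f x) (f y)` with `x < t < y` are bounded below, so it
suffices that `1 / |x - y| ^ 2` has infinite integral over `(l, t) × (t, u)`. For fixed `x`, the
points `y` with `y - t < t - x` form an interval of length `|x - t|` on which `|x - y| < 2 |x - t|`;
they contribute at least `1 / (4 |x - t|)`, whose integral in `x` diverges logarithmically at `t`.
-/

open scoped ENNReal Topology

section InverseKernels

variable {t : ℝ} {s s' : Set ℝ}

theorem lintegral_inv_abs_sub_eq_top (hs : s ∈ 𝓝[<] t) :
    ∫⁻ x in s, ENNReal.ofReal |x - t|⁻¹ = ∞ := by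
  obtain ⟨l, hlt : l < t, hls⟩ := mem_nhdsLT_iff_exists_Ioo_subset.1 hs
  refine eq_top_mono (lintegral_mono_set hls) ?_
  by_contra hfinite
  have hintegrable : IntegrableOn (fun x : ℝ ↦ (x - t)⁻¹) (Ioo l t) := by
    refine ⟨by fun_prop, hasFiniteIntegral_iff_norm _ |>.2 ?_⟩
    simpa only [norm_inv, Real.norm_eq_abs] using lt_top_iff_ne_top.2 hfinite
  have hinterval := (intervalIntegrable_iff_integrableOn_Ioo_of_le hlt.le).2 hintegrable
  exact (intervalIntegrable_sub_inv_iff.1 hinterval).elim hlt.ne (· right_mem_uIcc)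

theorem ofReal_inv_abs_sub_div_four_le_lintegral {x : ℝ} (hx : x < t) :
    ENNReal.ofReal (|x - t|⁻¹ / 4) ≤
      ∫⁻ y in Ioo t (2 * t - x), ENNReal.ofReal (|x - y| ^ 2)⁻¹ := by
  have hpos : 0 < t - x := sub_pos.2 hx
  calc ENNReal.ofReal (|x - t|⁻¹ / 4)
      = ∫⁻ _ in Ioo t (2 * t - x), ENNReal.ofReal ((2 * (t - x)) ^ 2)⁻¹ := by
        rw [setLIntegral_const, Real.volume_Ioo, ← ENNReal.ofReal_mul (by positivity),
          abs_sub_comm, abs_of_pos hpos]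
        congr 1
        field_simp
        ring
    _ ≤ ∫⁻ y in Ioo t (2 * t - x), ENNReal.ofReal (|x - y| ^ 2)⁻¹ := by
        refine setLIntegral_mono' measurableSet_Ioo fun y hy ↦ ?_
        have hxy : 0 < y - x := sub_pos.2 (hx.trans hy.1)
        rw [abs_sub_comm, abs_of_pos hxy]
        gcongr
        linarith [hy.2]

theorem lintegral_lintegral_inv_sq_abs_sub_eq_top (hs : s ∈ 𝓝[<] t) (hs' : s' ∈ 𝓝[>] t) :
    ∫⁻ x in s, ∫⁻ y in s', ENNReal.ofReal (|x - y| ^ 2)⁻¹ = ∞ := by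
  obtain ⟨u, htu : t < u, hus'⟩ := mem_nhdsGT_iff_exists_Ioo_subset.1 hs'
  have hreflect : Ioo (2 * t - u) t ∈ 𝓝[<] t := Ioo_mem_nhdsLT (by linarith)
  obtain ⟨l, hlt, hl⟩ := mem_nhdsLT_iff_exists_Ioo_subset.1 (inter_mem hs hreflect)
  refine top_unique ?_
  calc ∞ = ∫⁻ x in Ioo l t, ENNReal.ofReal (|x - t|⁻¹ / 4) := by
        simp_rw [div_eq_mul_inv, ENNReal.ofReal_mul' (show (0 : ℝ) ≤ 4⁻¹ by norm_num)]
        rw [lintegral_mul_const' _ _ ENNReal.ofReal_ne_top,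
          lintegral_inv_abs_sub_eq_top (Ioo_mem_nhdsLT hlt), ENNReal.top_mul (by simp)]
    _ ≤ ∫⁻ x in Ioo l t, ∫⁻ y in s', ENNReal.ofReal (|x - y| ^ 2)⁻¹ := by
        refine setLIntegral_mono' measurableSet_Ioo fun x hx ↦ ?_
        have hsubset : Ioo t (2 * t - x) ⊆ s' :=
          (Ioo_subset_Ioo_right (by linarith [(hl hx).2.1])).trans hus'
        exact (ofReal_inv_abs_sub_div_four_le_lintegral hx.2).trans (lintegral_mono_set hsubset)
    _ ≤ ∫⁻ x in s, ∫⁻ y in s', ENNReal.ofReal (|x - y| ^ 2)⁻¹ :=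
        lintegral_mono_set fun x hx ↦ (hl hx).1

theorem lintegral_lintegral_eq_top_of_eventually_inv_sq_abs_sub_le {K : ℝ → ℝ → ℝ≥0∞} {c : ℝ}
    (hs : s ∈ 𝓝[<] t) (hs' : s' ∈ 𝓝[>] t) (hc : 0 < c)
    (hK : ∀ᶠ z in 𝓝[<] t ×ˢ 𝓝[>] t,
      ENNReal.ofReal (c * (|z.1 - z.2| ^ 2)⁻¹) ≤ K z.1 z.2) :
    ∫⁻ x in s, ∫⁻ y in s', K x y = ∞ := by
  obtain ⟨P, hP, Q, hQ, hPQ⟩ := eventually_prod_iff.1 hK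
  obtain ⟨l, hlt, hl⟩ := mem_nhdsLT_iff_exists_Ioo_subset.1 (inter_mem hs hP)
  obtain ⟨u, htu, hu⟩ := mem_nhdsGT_iff_exists_Ioo_subset.1 (inter_mem hs' hQ)
  refine top_unique ?_
  calc ∞ = ∫⁻ x in Ioo l t, ∫⁻ y in Ioo t u, ENNReal.ofReal (c * (|x - y| ^ 2)⁻¹) := by
        simp_rw [ENNReal.ofReal_mul hc.le, lintegral_const_mul' _ _ ENNReal.ofReal_ne_top]
        rw [lintegral_lintegral_inv_sq_abs_sub_eq_top (Ioo_mem_nhdsLT hlt) (Ioo_mem_nhdsGT htu),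
          ENNReal.mul_top (ENNReal.ofReal_pos.2 hc).ne']
    _ ≤ ∫⁻ x in Ioo l t, ∫⁻ y in Ioo t u, K x y :=
        setLIntegral_mono' measurableSet_Ioo fun x hx ↦
          setLIntegral_mono' measurableSet_Ioo fun y hy ↦ hPQ (hl hx).2 (hu hy).2
    _ ≤ ∫⁻ x in Ioo l t, ∫⁻ y in s', K x y :=
        lintegral_mono fun x ↦ lintegral_mono_set fun y hy ↦ (hu hy).1
    _ ≤ ∫⁻ x in s, ∫⁻ y in s', K x y := lintegral_mono_set fun x hx ↦ (hl hx).1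

end InverseKernels

theorem tendsto_abs_sub_nhdsLT_prod_nhdsGT (t : ℝ) :
    Tendsto (fun z : ℝ × ℝ ↦ |z.1 - z.2|) (𝓝[<] t ×ˢ 𝓝[>] t) (𝓝[>] 0) := by
  have hfst : Tendsto Prod.fst (𝓝[<] t ×ˢ 𝓝[>] t) (𝓝[<] t) := tendsto_fst
  have hsnd : Tendsto Prod.snd (𝓝[<] t ×ˢ 𝓝[>] t) (𝓝[>] t) := tendsto_snd
  refine tendsto_nhdsWithin_iff.2 ⟨?_, ?_⟩
  · simpa using (hfst.mono_right nhdsWithin_le_nhds).sub (hsnd.mono_right nhdsWithin_le_nhds) |>.abs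
  · filter_upwards [hfst self_mem_nhdsWithin, hsnd self_mem_nhdsWithin]
      with z (hz₁ : z.1 < t) (hz₂ : t < z.2)
    exact abs_pos.2 (sub_ne_zero.2 (hz₁.trans hz₂).ne)

/-- For the `W^{σ,p}` Gagliardo seminorm, `q = 1 + σ p`, so `2 ≤ q` is the condition `1 ≤ σ p`. -/
theorem gagliardo_integral_infinite_of_jump_general {X : Type*} [MetricSpace X] {f : ℝ → X}
    {t p q : ℝ} {s : Set ℝ} {A B : X} (hq : 2 ≤ q) (hs : s ∈ 𝓝 t)
    (hA : Tendsto f (𝓝[<] t) (𝓝 A)) (hB : Tendsto f (𝓝[>] t) (𝓝 B)) (hAB : A ≠ B) :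
    ∫⁻ x in s, ∫⁻ y in s, ENNReal.ofReal (dist (f x) (f y) ^ p / |x - y| ^ q) = ∞ := by
  have hdist : 0 < dist A B := dist_pos.2 hAB
  have hjump : Tendsto (fun z : ℝ × ℝ ↦ dist (f z.1) (f z.2) ^ p) (𝓝[<] t ×ˢ 𝓝[>] t)
      (𝓝 (dist A B ^ p)) :=
    ((hA.comp tendsto_fst).dist (hB.comp tendsto_snd)).rpow_const (.inl hdist.ne')
  obtain ⟨c, hc, hcAB⟩ := exists_between (rpow_pos_of_pos hdist p)
  refine lintegral_lintegral_eq_top_of_eventually_inv_sq_abs_sub_le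
    (mem_nhdsWithin_of_mem_nhds hs) (mem_nhdsWithin_of_mem_nhds hs) hc ?_
  filter_upwards [hjump.eventually_const_lt hcAB,
    tendsto_abs_sub_nhdsLT_prod_nhdsGT t (Ioo_mem_nhdsGT one_pos)] with z hz ⟨hpos, hlt_one⟩
  have hpow : |z.1 - z.2| ^ q ≤ |z.1 - z.2| ^ 2 := by
    simpa only [rpow_two] using rpow_le_rpow_of_exponent_ge hpos hlt_one.le hq
  rw [div_eq_mul_inv]
  gcongr

/-- A function on `[0, 2π]` with a jump discontinuity has infinite Gagliardo `H^{1/2}`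
double integral. -/
theorem gagliardo_integral_infinite_of_jump
    (d : ℕ) (hd : 1 ≤ d) (f : ℝ → EuclideanSpace ℝ (Fin d)) (θ₀ : ℝ)
    (hθ₀ : θ₀ ∈ Set.Ioo (0 : ℝ) (2 * π)) (A B : EuclideanSpace ℝ (Fin d))
    (hA : Filter.Tendsto f (nhdsWithin θ₀ (Set.Iio θ₀)) (nhds A))
    (hB : Filter.Tendsto f (nhdsWithin θ₀ (Set.Ioi θ₀)) (nhds B))
    (hAB : A ≠ B) :
    ∫⁻ θ₁ in Set.Ioc (0 : ℝ) (2 * π), ∫⁻ θ₂ in Set.Ioc (0 : ℝ) (2 * π),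
      ENNReal.ofReal (‖f θ₁ - f θ₂‖ ^ 2 / |θ₁ - θ₂| ^ 2) = ⊤ := by
  simpa only [dist_eq_norm, rpow_two] using
    gagliardo_integral_infinite_of_jump_general (p := 2) le_rfl (Ioc_mem_nhds hθ₀.1 hθ₀.2) hA hB hAB
end

section
/- Let n ≥ 1 and let γ : ℝ → ℝⁿ be C¹ and 2π-periodic. Suppose v : ℝ² → ℝⁿ satisfies v(ρ cos α, ρ sin α) = ρ·γ(α) for all ρ ∈ [0,1] and α ∈ ℝ (the cone over γ), and v is differentiable at every point of the open unit ball of ℝ² except possibly the origin. Then the Dirichlet energy of v over the unit ball satisfies (1/2)∫_{B(0,1)} (‖∂ₓv‖² + ‖∂_y v‖²) dA ≤ π·( sup_{t∈[0,2π]} ‖γ(t)‖² + sup_{t∈[0,2π]} ‖γ'(t)‖² ). -/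
/-!
Along a ray the cone is linear with slope `γ α`, and along the circle of radius `ρ` it is `ρ • γ`,
so its derivatives in the unit radial and tangential directions at `(ρ, α)` are `γ α` and `γ' α`.
The energy density does not depend on the orthonormal frame, hence equals `‖γ α‖² + ‖γ' α‖²`
whatever `ρ` is; bounding it pointwise and using that the disk has area `π` gives the estimate,
even with `π / 2` in place of `π`.
-/

open Real Set Metric MeasureTheory

open scoped ENNReal

open scoped Topology

section RadialExtension

variable {F E : Type*} [NormedAddCommGroup F] [NormedSpace ℝ F] [NormedAddCommGroup E]
  [NormedSpace ℝ E] {v : F → E} {A : F →L[ℝ] E} {ρ : ℝ}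

lemma apply_eq_of_hasFDerivAt_of_eventually_smul {u : F} {c : E}
    (hA : HasFDerivAt v A (ρ • u)) (hv : ∀ᶠ r in 𝓝 ρ, v (r • u) = r • c) : A u = c := by
  have hray : HasDerivAt (fun r : ℝ => v (r • u)) (A u) ρ :=
    hA.comp_hasDerivAt ρ (by simpa using (hasDerivAt_id ρ).smul_const u)
  have hlinear : HasDerivAt (fun r : ℝ => r • c) c ρ := by
    simpa using (hasDerivAt_id ρ).smul_const c
  exact hray.unique (hlinear.congr_of_eventuallyEq hv)

lemma hasDerivAt_of_eventually_smul {u : ℝ → F} {u' : F} {γ : ℝ → E} {α : ℝ} (hρ : ρ ≠ 0)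
    (hA : HasFDerivAt v A (ρ • u α)) (hu : HasDerivAt u u' α)
    (hv : ∀ᶠ t in 𝓝 α, v (ρ • u t) = ρ • γ t) : HasDerivAt γ (A u') α := by
  have hcurve : HasDerivAt (fun t => v (ρ • u t)) (A (ρ • u')) α :=
    hA.comp_hasDerivAt α (hu.const_smul ρ)
  have hrescaled : HasDerivAt (fun t => ρ⁻¹ • v (ρ • u t)) (A u') α := by
    simpa only [map_smul, inv_smul_smul₀ hρ] using hcurve.fun_const_smul ρ⁻¹
  refine hrescaled.congr_of_eventuallyEq ?_
  filter_upwards [hv] with t ht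
  rw [ht, inv_smul_smul₀ hρ]

end RadialExtension

lemma norm_sq_add_norm_sq_rotation {E : Type*} [NormedAddCommGroup E] [InnerProductSpace ℝ E]
    (a b : E) (α : ℝ) :
    ‖cos α • a + sin α • b‖ ^ 2 + ‖-sin α • a + cos α • b‖ ^ 2 = ‖a‖ ^ 2 + ‖b‖ ^ 2 := by
  simp only [norm_add_sq_real, norm_smul, mul_pow, real_inner_smul_left, real_inner_smul_right,
    norm_eq_abs, sq_abs]
  linear_combination (‖a‖ ^ 2 + ‖b‖ ^ 2) * sin_sq_add_cos_sq α

/-- The unit vector of the plane at angle `α`, so that `ρ • planeDirection α` has polar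
coordinates `(ρ, α)`. -/
noncomputable def planeDirection (α : ℝ) : EuclideanSpace ℝ (Fin 2) :=
  !₂[cos α, sin α]

lemma smul_planeDirection (ρ α : ℝ) : ρ • planeDirection α = !₂[ρ * cos α, ρ * sin α] := by
  ext i
  fin_cases i <;> simp [planeDirection]

lemma planeDirection_eq_add (α : ℝ) :
    planeDirection α = cos α • EuclideanSpace.single 0 1 + sin α • EuclideanSpace.single 1 1 := by
  ext i
  fin_cases i <;> simp [planeDirection]

lemma norm_planeDirection (α : ℝ) : ‖planeDirection α‖ = 1 := by
  simp [planeDirection, EuclideanSpace.norm_eq]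

lemma planeDirection_periodic : Function.Periodic planeDirection (2 * π) := fun α => by
  simp [planeDirection]

lemma hasDerivAt_planeDirection (α : ℝ) :
    HasDerivAt planeDirection (planeDirection (α + π / 2)) α := by
  rw [planeDirection_eq_add (α + π / 2), cos_add_pi_div_two, sin_add_pi_div_two,
    funext planeDirection_eq_add]
  exact ((hasDerivAt_cos α).smul_const _).add ((hasDerivAt_sin α).smul_const _)

lemma exists_eq_norm_smul_planeDirection (x : EuclideanSpace ℝ (Fin 2)) :
    ∃ α ∈ Ico 0 (2 * π), x = ‖x‖ • planeDirection α := by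
  let z : ℂ := Complex.orthonormalBasisOneI.repr.symm x
  have hz : ‖z‖ = ‖x‖ := LinearIsometryEquiv.norm_map _ x
  have hx : x = ‖x‖ • planeDirection z.arg := by
    rw [smul_planeDirection, ← hz, Complex.norm_mul_cos_arg, Complex.norm_mul_sin_arg]
    ext i
    fin_cases i <;> simp [z]
  obtain ⟨α, hα, hdir⟩ := planeDirection_periodic.exists_mem_Ico₀ two_pi_pos z.arg
  exact ⟨α, hα, hdir ▸ hx⟩

section DirichletEnergy

variable {E : Type*} [NormedAddCommGroup E] [NormedSpace ℝ E]

/-- The density `‖∂ₓv‖² + ‖∂_y v‖²` of twice the Dirichlet energy of a map on the plane. -/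
noncomputable def energyDensity (v : EuclideanSpace ℝ (Fin 2) → E)
    (x : EuclideanSpace ℝ (Fin 2)) : ℝ :=
  ‖fderiv ℝ v x (EuclideanSpace.single 0 1)‖ ^ 2 + ‖fderiv ℝ v x (EuclideanSpace.single 1 1)‖ ^ 2

/-- The Dirichlet energy of a map over the open unit disk, with values in `[0, ∞]`. -/
noncomputable def diskDirichletEnergy (v : EuclideanSpace ℝ (Fin 2) → E) : ℝ≥0∞ :=
  1 / 2 * ∫⁻ x in ball 0 1, ENNReal.ofReal (energyDensity v x)

/-- `v` is the cone (radial extension) over `γ` on the closed unit disk. -/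
def IsConeOver (γ : ℝ → E) (v : EuclideanSpace ℝ (Fin 2) → E) : Prop :=
  ∀ ρ ∈ Icc (0 : ℝ) 1, ∀ α, v (ρ • planeDirection α) = ρ • γ α

lemma diskDirichletEnergy_le_of_energyDensity_le {v : EuclideanSpace ℝ (Fin 2) → E} {M : ℝ}
    (hM : ∀ᵐ x, x ∈ ball 0 1 → energyDensity v x ≤ M) :
    diskDirichletEnergy v ≤ ENNReal.ofReal (π / 2 * M) := by
  calc diskDirichletEnergy v
      ≤ 1 / 2 * ∫⁻ _ in ball (0 : EuclideanSpace ℝ (Fin 2)) 1, ENNReal.ofReal M := by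
        refine mul_le_mul_right (setLIntegral_mono_ae' measurableSet_ball ?_) _
        filter_upwards [hM] with x hx hxball
        exact ENNReal.ofReal_le_ofReal (hx hxball)
    _ = ENNReal.ofReal (1 / 2) * (ENNReal.ofReal M * ENNReal.ofReal π) := by
        rw [setLIntegral_const, EuclideanSpace.volume_ball_fin_two]
        simp [ENNReal.ofReal_eq_coe_nnreal pi_pos.le]
    _ = ENNReal.ofReal (π / 2 * M) := by
        rw [← ENNReal.ofReal_mul' pi_pos.le, ← ENNReal.ofReal_mul (by norm_num)]
        ring_nf

namespace IsConeOver

variable {γ : ℝ → E} {v : EuclideanSpace ℝ (Fin 2) → E} {ρ α : ℝ}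

lemma fderiv_planeDirection (hv : IsConeOver γ v) (hρ : ρ ∈ Ioo (0 : ℝ) 1)
    (hd : DifferentiableAt ℝ v (ρ • planeDirection α)) :
    fderiv ℝ v (ρ • planeDirection α) (planeDirection α) = γ α :=
  apply_eq_of_hasFDerivAt_of_eventually_smul hd.hasFDerivAt <| by
    filter_upwards [Icc_mem_nhds hρ.1 hρ.2] with r hr using hv r hr α

lemma hasDerivAt (hv : IsConeOver γ v) (hρ : ρ ∈ Ioc (0 : ℝ) 1)
    (hd : DifferentiableAt ℝ v (ρ • planeDirection α)) :
    HasDerivAt γ (fderiv ℝ v (ρ • planeDirection α) (planeDirection (α + π / 2))) α :=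
  hasDerivAt_of_eventually_smul hρ.1.ne' hd.hasFDerivAt (hasDerivAt_planeDirection α) <|
    .of_forall <| hv ρ (Ioc_subset_Icc_self hρ)

lemma differentiable (hv : IsConeOver γ v)
    (hdiff : ∀ x ∈ ball (0 : EuclideanSpace ℝ (Fin 2)) 1, x ≠ 0 → DifferentiableAt ℝ v x) :
    Differentiable ℝ γ := fun α => by
  have hnorm : ‖(1 / 2 : ℝ) • planeDirection α‖ = 1 / 2 := by
    simp [norm_smul, norm_planeDirection]
  have hd : DifferentiableAt ℝ v ((1 / 2 : ℝ) • planeDirection α) :=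
    hdiff _ (mem_ball_zero_iff.2 (by rw [hnorm]; norm_num))
      (norm_pos_iff.1 (by rw [hnorm]; norm_num))
  exact (hv.hasDerivAt (by norm_num) hd).differentiableAt

end IsConeOver

end DirichletEnergy

namespace IsConeOver

variable {E : Type*} [NormedAddCommGroup E] [InnerProductSpace ℝ E] {γ : ℝ → E}
  {v : EuclideanSpace ℝ (Fin 2) → E}

lemma energyDensity_eq (hv : IsConeOver γ v) {ρ α : ℝ} (hρ : ρ ∈ Ioo (0 : ℝ) 1)
    (hd : DifferentiableAt ℝ v (ρ • planeDirection α)) :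
    energyDensity v (ρ • planeDirection α) = ‖γ α‖ ^ 2 + ‖deriv γ α‖ ^ 2 := by
  rw [(hv.hasDerivAt (Ioo_subset_Ioc_self hρ) hd).deriv, ← hv.fderiv_planeDirection hρ hd,
    energyDensity, planeDirection_eq_add, planeDirection_eq_add (α + π / 2), cos_add_pi_div_two,
    sin_add_pi_div_two]
  simp only [map_add, map_smul, norm_sq_add_norm_sq_rotation]

lemma energyDensity_le (hv : IsConeOver γ v) {M : ℝ}
    (hM : ∀ α ∈ Ico 0 (2 * π), ‖γ α‖ ^ 2 + ‖deriv γ α‖ ^ 2 ≤ M)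
    {x : EuclideanSpace ℝ (Fin 2)} (hx : x ∈ ball 0 1) (hx₀ : x ≠ 0)
    (hd : DifferentiableAt ℝ v x) : energyDensity v x ≤ M := by
  obtain ⟨α, hα, hpolar⟩ := exists_eq_norm_smul_planeDirection x
  rw [hpolar] at hd ⊢
  rw [hv.energyDensity_eq ⟨norm_pos_iff.2 hx₀, mem_ball_zero_iff.1 hx⟩ hd]
  exact hM α hα

end IsConeOver

theorem cone_dirichlet_energy_le_general {E : Type*} [NormedAddCommGroup E]
    [InnerProductSpace ℝ E] {γ : ℝ → E} {v : EuclideanSpace ℝ (Fin 2) → E}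
    (hv : IsConeOver γ v)
    (hdiff : ∀ x ∈ ball (0 : EuclideanSpace ℝ (Fin 2)) 1, x ≠ 0 → DifferentiableAt ℝ v x)
    (hbdd : BddAbove ((fun t => ‖deriv γ t‖ ^ 2) '' Icc 0 (2 * π))) :
    diskDirichletEnergy v ≤ ENNReal.ofReal (π / 2 *
      ((⨆ t : Icc (0 : ℝ) (2 * π), ‖γ t‖ ^ 2) + ⨆ t : Icc (0 : ℝ) (2 * π), ‖deriv γ t‖ ^ 2)) := by
  have hγbdd : BddAbove ((fun t => ‖γ t‖ ^ 2) '' Icc 0 (2 * π)) :=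
    isCompact_Icc.bddAbove_image ((hv.differentiable hdiff).continuous.norm.pow 2).continuousOn
  refine diskDirichletEnergy_le_of_energyDensity_le ?_
  filter_upwards [Measure.ae_ne volume 0] with x hx₀ hx
  refine hv.energyDensity_le (fun α hα => ?_) hx hx₀ (hdiff x hx hx₀)
  exact add_le_add (le_ciSup_set hγbdd (Ico_subset_Icc_self hα))
    (le_ciSup_set hbdd (Ico_subset_Icc_self hα))

/-- Dirichlet energy bound for the cone (radial extension) over a closed `C¹` curve:
`E(v) ≤ π·(sup ‖γ‖² + sup ‖γ'‖²)`. -/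
theorem cone_dirichlet_energy_le
    (n : ℕ) (hn : 1 ≤ n) (γ : ℝ → EuclideanSpace ℝ (Fin n)) (hγ : ContDiff ℝ 1 γ)
    (hper : ∀ t : ℝ, γ (t + 2 * π) = γ t)
    (v : EuclideanSpace ℝ (Fin 2) → EuclideanSpace ℝ (Fin n))
    (hv : ∀ ρ ∈ Set.Icc (0 : ℝ) 1, ∀ α : ℝ,
      v ((WithLp.equiv 2 (Fin 2 → ℝ)).symm ![ρ * Real.cos α, ρ * Real.sin α]) = ρ • γ α)
    (hdiff : ∀ x ∈ Metric.ball (0 : EuclideanSpace ℝ (Fin 2)) 1, x ≠ 0 →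
      DifferentiableAt ℝ v x) :
    (1 / 2 : ℝ≥0∞) * ∫⁻ x in Metric.ball (0 : EuclideanSpace ℝ (Fin 2)) 1,
        ENNReal.ofReal (‖fderiv ℝ v x (EuclideanSpace.single 0 1)‖ ^ 2 +
          ‖fderiv ℝ v x (EuclideanSpace.single 1 1)‖ ^ 2)
      ≤ ENNReal.ofReal (π *
          ((⨆ t : Set.Icc (0 : ℝ) (2 * π), ‖γ t‖ ^ 2) +
            (⨆ t : Set.Icc (0 : ℝ) (2 * π), ‖deriv γ t‖ ^ 2))) := by
  have hv' : IsConeOver γ v := fun ρ hρ α => by rw [smul_planeDirection]; exact hv ρ hρ α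
  have hbdd : BddAbove ((fun t => ‖deriv γ t‖ ^ 2) '' Icc 0 (2 * π)) :=
    isCompact_Icc.bddAbove_image (hγ.continuous_deriv_one.norm.pow 2).continuousOn
  refine (cone_dirichlet_energy_le_general hv' hdiff hbdd).trans (ENNReal.ofReal_le_ofReal ?_)
  exact mul_le_mul_of_nonneg_right (half_le_self pi_pos.le)
    (add_nonneg (Real.iSup_nonneg fun _ => sq_nonneg _) (Real.iSup_nonneg fun _ => sq_nonneg _))
end

section
/- Let n ≥ 1, let C > 0 and δ ∈ (0, 1), and let u : ℝ² → ℝⁿ be C¹ on the open unit disk D with Dirichlet energy E(u) = (1/2)∫_D (‖∂ₓu‖² + ‖∂_y u‖²) dA ≤ C. Let z₀ be a point of the unit circle. Then there exists ρ ∈ [δ, √δ] such that for all z, w ∈ D with ‖z − z₀‖ = ρ and ‖w − z₀‖ = ρ, one has ‖u(z) − u(w)‖ ≤ √(8πC / log(1/δ)). -/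
open Real Set Metric MeasureTheory

open scoped ENNReal

/-! In polar coordinates about `z₀` the energy bounds `∫ (ρ² ∫ |∇u|² dθ) dρ / ρ`, so by the mean
value property for the measure `dρ / ρ`, of mass `log (b / a)` on `[a, b]`, some radius `ρ ∈ [a, b]`
has a small angular integral. Cauchy–Schwarz along the circle of radius `ρ` then bounds the
oscillation of `u` on every arc lying in the domain. Two points of a disk on that circle are always
joined by such an arc: by the law of cosines, the distance from the center of the disk increases
with the angle measured from the direction of that center. -/

section Integration

theorem sq_lintegral_le_measure_univ_mul_lintegral_sq {α : Type*} [MeasurableSpace α]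
    (μ : Measure α) (f : α → ℝ≥0∞) :
    (∫⁻ x, f x ∂μ) ^ 2 ≤ μ univ * ∫⁻ x, f x ^ 2 ∂μ := by
  obtain ⟨g, hg, hgf, hfg⟩ := exists_measurable_le_lintegral_eq μ f
  have holder : ∫⁻ x, g x ∂μ ≤ μ univ ^ (1 / 2 : ℝ) * (∫⁻ x, g x ^ 2 ∂μ) ^ (1 / 2 : ℝ) := by
    simpa using ENNReal.lintegral_mul_le_Lp_mul_Lq μ Real.HolderConjugate.two_two
      (aemeasurable_const (b := (1 : ℝ≥0∞))) hg.aemeasurable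
  calc (∫⁻ x, f x ∂μ) ^ 2 = (∫⁻ x, g x ∂μ) ^ 2 := by rw [hfg]
    _ ≤ (μ univ ^ (1 / 2 : ℝ) * (∫⁻ x, g x ^ 2 ∂μ) ^ (1 / 2 : ℝ)) ^ 2 := by gcongr
    _ = μ univ * ∫⁻ x, g x ^ 2 ∂μ := by
      rw [← ENNReal.mul_rpow_of_nonneg _ _ (by norm_num), ← ENNReal.rpow_mul_natCast]
      norm_num
    _ ≤ μ univ * ∫⁻ x, f x ^ 2 ∂μ := by
      gcongr with x
      exact hgf x

theorem enorm_sub_sq_le_mul_lintegral_deriv_sq {E : Type*} [NormedAddCommGroup E]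
    [NormedSpace ℝ E] {γ : ℝ → E} {a b : ℝ} (hγ : ContDiffOn ℝ 1 γ (Icc a b)) (hab : a ≤ b) :
    ‖γ b - γ a‖ₑ ^ 2 ≤ ENNReal.ofReal (b - a) * ∫⁻ t in Icc a b, ‖deriv γ t‖ₑ ^ 2 :=
  calc ‖γ b - γ a‖ₑ ^ 2 ≤ (∫⁻ t in Icc a b, ‖deriv γ t‖ₑ) ^ 2 := by
        gcongr
        exact enorm_sub_le_lintegral_deriv_of_contDiffOn_Icc hγ hab
    _ ≤ ENNReal.ofReal (b - a) * ∫⁻ t in Icc a b, ‖deriv γ t‖ₑ ^ 2 := by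
        simpa using sq_lintegral_le_measure_univ_mul_lintegral_sq (volume.restrict (Icc a b)) _

theorem setLIntegral_Icc_le_of_periodic {f : ℝ → ℝ≥0∞} {T a b : ℝ} (hf : Function.Periodic f T)
    (hT : 0 < T) (hab : b ≤ a + T) (t : ℝ) :
    ∫⁻ x in Icc a b, f x ≤ ∫⁻ x in Ioc t (t + T), f x := by
  have hf' (g : AddSubgroup.zmultiples T) (x : ℝ) : f (g +ᵥ x) = f x := by
    obtain ⟨_, n, rfl⟩ := g
    simpa [AddSubgroup.vadd_def, add_comm] using hf.zsmul n x
  calc ∫⁻ x in Icc a b, f x = ∫⁻ x in Ioc a b, f x := by rw [restrict_Ioc_eq_restrict_Icc]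
    _ ≤ ∫⁻ x in Ioc a (a + T), f x := lintegral_mono_set (Ioc_subset_Ioc_right hab)
    _ = ∫⁻ x in Ioc t (t + T), f x :=
      (isAddFundamentalDomain_Ioc hT a).setLIntegral_eq (isAddFundamentalDomain_Ioc hT t) f hf'

theorem lintegral_circleMap_eq_lintegral {f : ℂ → ℝ≥0∞} (hf : Measurable f) (c : ℂ) :
    ∫⁻ r in Ioi (0 : ℝ), ENNReal.ofReal r * ∫⁻ θ in Ioc (-π) π, f (circleMap c r θ)
      = ∫⁻ z, f z := by
  rw [← lintegral_add_left_eq_self f c, ← Complex.lintegral_comp_polarCoord_symm,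
    polarCoord_target, Measure.volume_eq_prod, setLIntegral_prod]
  · refine lintegral_congr fun r => ?_
    rw [← lintegral_const_mul' _ _ ENNReal.ofReal_ne_top, restrict_Ioo_eq_restrict_Ioc]
    simp [circleMap, Complex.exp_mul_I]
  · simp only [Complex.polarCoord_symm_apply, smul_eq_mul]
    fun_prop

theorem setLIntegral_circleMap_Icc_le {Ω : Set ℂ} {c : ℂ} {r α β : ℝ} (hαβ : β ≤ α + 2 * π)
    (harc : MapsTo (circleMap c r) (Icc α β) Ω) (f : ℂ → ℝ≥0∞) :
    ∫⁻ θ in Icc α β, f (circleMap c r θ) ≤ ∫⁻ θ in Ioc (-π) π, Ω.indicator f (circleMap c r θ) :=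
  calc ∫⁻ θ in Icc α β, f (circleMap c r θ)
      = ∫⁻ θ in Icc α β, Ω.indicator f (circleMap c r θ) :=
        setLIntegral_congr_fun measurableSet_Icc fun θ hθ => (indicator_of_mem (harc hθ) _).symm
    _ ≤ ∫⁻ θ in Ioc (-π) (-π + 2 * π), Ω.indicator f (circleMap c r θ) :=
        setLIntegral_Icc_le_of_periodic ((periodic_circleMap c r).comp (Ω.indicator f))
          two_pi_pos hαβ (-π)
    _ = ∫⁻ θ in Ioc (-π) π, Ω.indicator f (circleMap c r θ) := by
        rw [show -π + 2 * π = π by ring]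

theorem setLIntegral_Icc_inv {a b : ℝ} (ha : 0 < a) (hab : a ≤ b) :
    ∫⁻ r in Icc a b, ENNReal.ofReal r⁻¹ = ENNReal.ofReal (log (b / a)) := by
  rw [← integral_inv_of_pos ha (ha.trans_le hab), intervalIntegral.integral_of_le hab,
    ← integral_Icc_eq_integral_Ioc, ofReal_integral_eq_lintegral_ofReal]
  · exact (continuousOn_inv₀.mono fun r hr => (ha.trans_le hr.1).ne').integrableOn_Icc
  · filter_upwards [ae_restrict_mem measurableSet_Icc] with r hr
    exact inv_nonneg.2 (ha.le.trans hr.1)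

theorem exists_sq_mul_le_setLIntegral_div_log {G : ℝ → ℝ≥0∞} {a b : ℝ}
    (hG : AEMeasurable G (volume.restrict (Icc a b))) (ha : 0 < a) (hab : a < b) :
    ∃ r ∈ Icc a b, ENNReal.ofReal (r ^ 2) * G r
      ≤ (∫⁻ r in Icc a b, ENNReal.ofReal r * G r) / ENNReal.ofReal (log (b / a)) := by
  set μ : Measure ℝ := volume.withDensity fun r => ENNReal.ofReal r⁻¹ with hμ
  have hμ_Icc : μ (Icc a b) = ENNReal.ofReal (log (b / a)) := by
    rw [hμ, withDensity_apply _ measurableSet_Icc, setLIntegral_Icc_inv ha hab.le]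
  have hμ_restrict : μ.restrict (Icc a b)
      = (volume.restrict (Icc a b)).withDensity fun r => ENNReal.ofReal r⁻¹ :=
    restrict_withDensity measurableSet_Icc _
  have hf : AEMeasurable (fun r => ENNReal.ofReal (r ^ 2) * G r) (volume.restrict (Icc a b)) :=
    (by fun_prop : Measurable fun r : ℝ => ENNReal.ofReal (r ^ 2)).aemeasurable.mul hG
  have hμ_pos : μ (Icc a b) ≠ 0 := by
    simpa [hμ_Icc] using log_pos ((one_lt_div ha).2 hab)
  obtain ⟨r, hr, hle⟩ := exists_le_setLAverage hμ_pos (hμ_Icc ▸ ENNReal.ofReal_ne_top)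
    (hf.mono_ac (hμ_restrict ▸ withDensity_absolutelyContinuous _ _))
  refine ⟨r, hr, hle.trans_eq ?_⟩
  rw [setLAverage_eq, hμ_Icc, hμ_restrict,
    lintegral_withDensity_eq_lintegral_mul₀ (by fun_prop) hf]
  congr 1
  refine setLIntegral_congr_fun measurableSet_Icc fun r hr => ?_
  have hr0 : 0 < r := ha.trans_le hr.1
  rw [Pi.mul_apply, ← mul_assoc, ← ENNReal.ofReal_mul (inv_nonneg.2 hr0.le)]
  field_simp

end Integration

section CircularArcs

theorem norm_circleMap_sub_sq (z₀ c : ℂ) (ρ θ : ℝ) :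
    ‖circleMap z₀ ρ θ - c‖ ^ 2
      = ρ ^ 2 + ‖c - z₀‖ ^ 2 - 2 * ρ * ‖c - z₀‖ * cos (θ - (c - z₀).arg) := by
  have hpolar : circleMap z₀ ρ θ - c = circleMap 0 ρ θ - circleMap 0 ‖c - z₀‖ (c - z₀).arg := by
    rw [circleMap_zero ‖c - z₀‖, Complex.norm_mul_exp_arg_mul_I, ← circleMap_sub_center z₀]
    ring
  rw [hpolar, Complex.sq_norm, Complex.normSq_apply]
  simp only [Complex.sub_re, Complex.sub_im, circleMap_zero_re, circleMap_zero_im, cos_sub]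
  linear_combination ρ ^ 2 * sin_sq_add_cos_sq θ
    + ‖c - z₀‖ ^ 2 * sin_sq_add_cos_sq (c - z₀).arg

theorem norm_circleMap_sub_le_of_abs_sub_arg_le {z₀ c : ℂ} {ρ s t : ℝ} (hρ : 0 ≤ ρ)
    (hst : |s - (c - z₀).arg| ≤ |t - (c - z₀).arg|) (ht : |t - (c - z₀).arg| ≤ π) :
    ‖circleMap z₀ ρ s - c‖ ≤ ‖circleMap z₀ ρ t - c‖ := by
  have hcos : cos (t - (c - z₀).arg) ≤ cos (s - (c - z₀).arg) := by
    simpa only [cos_abs] using cos_le_cos_of_nonneg_of_le_pi (abs_nonneg _) ht hst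
  rw [← sq_le_sq₀ (norm_nonneg _) (norm_nonneg _), norm_circleMap_sub_sq, norm_circleMap_sub_sq]
  gcongr

theorem exists_arc_mapsTo_ball {z₀ c z w : ℂ} {ρ R : ℝ} (hz : z ∈ ball c R) (hw : w ∈ ball c R)
    (hzρ : ‖z - z₀‖ = ρ) (hwρ : ‖w - z₀‖ = ρ) :
    ∃ α β, |β - α| ≤ 2 * π ∧ circleMap z₀ ρ α = z ∧ circleMap z₀ ρ β = w ∧
      MapsTo (circleMap z₀ ρ) (uIcc α β) (ball c R) := by
  have hρ : 0 ≤ ρ := hzρ ▸ norm_nonneg _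
  set θ₀ := (c - z₀).arg
  have exists_angle {ζ : ℂ} (hζ : ‖ζ - z₀‖ = ρ) : ∃ θ, |θ - θ₀| ≤ π ∧ circleMap z₀ ρ θ = ζ := by
    have hmem : ζ ∈ circleMap z₀ ρ '' Ioc (θ₀ - π) (θ₀ - π + 2 * π) := by
      rw [(periodic_circleMap z₀ ρ).image_Ioc two_pi_pos, range_circleMap, abs_of_nonneg hρ]
      exact mem_sphere_iff_norm.2 hζ
    obtain ⟨θ, hθ, rfl⟩ := hmem
    exact ⟨θ, abs_le.2 ⟨by linarith [hθ.1], by linarith [hθ.2]⟩, rfl⟩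
  obtain ⟨α, hα, rfl⟩ := exists_angle hzρ
  obtain ⟨β, hβ, rfl⟩ := exists_angle hwρ
  refine ⟨α, β, ?_, rfl, rfl, fun θ hθ => ?_⟩
  · linarith [abs_sub_le β θ₀ α, abs_sub_comm θ₀ α]
  · rw [mem_ball_iff_norm] at hz hw ⊢
    have hmax : |θ - θ₀| ≤ max |α - θ₀| |β - θ₀| := by
      rcases mem_uIcc.1 hθ with h | h
      · exact abs_le_max_abs_abs (by linarith) (by linarith)
      · exact max_comm |β - θ₀| _ ▸ abs_le_max_abs_abs (by linarith) (by linarith)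
    rcases le_max_iff.1 hmax with h | h
    · exact (norm_circleMap_sub_le_of_abs_sub_arg_le hρ h hα).trans_lt hz
    · exact (norm_circleMap_sub_le_of_abs_sub_arg_le hρ h hβ).trans_lt hw

end CircularArcs

section DirichletEnergy

variable {E : Type*} [NormedAddCommGroup E] [NormedSpace ℝ E] {u : ℂ → E} {Ω : Set ℂ}

/-- The squared gradient norm `|∇u|² = ‖∂ₓu‖² + ‖∂_y u‖²` of a map on the plane, valued in
`[0, ∞]` so that it can be integrated without integrability assumptions. -/
noncomputable def gradNormSq (u : ℂ → E) (z : ℂ) : ℝ≥0∞ :=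
  ENNReal.ofReal (‖fderiv ℝ u z 1‖ ^ 2 + ‖fderiv ℝ u z Complex.I‖ ^ 2)

/-- The Dirichlet energy `(1/2) ∫_Ω |∇u|² dA` of a map on a planar domain `Ω`. -/
noncomputable def dirichletEnergy (u : ℂ → E) (Ω : Set ℂ) : ℝ≥0∞ :=
  (1 / 2 : ℝ≥0∞) * ∫⁻ z in Ω, gradNormSq u z

theorem two_mul_dirichletEnergy (u : ℂ → E) (Ω : Set ℂ) :
    2 * dirichletEnergy u Ω = ∫⁻ z in Ω, gradNormSq u z := by
  rw [dirichletEnergy, ← mul_assoc, one_div,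
    ENNReal.mul_inv_cancel two_ne_zero ENNReal.ofNat_ne_top, one_mul]

theorem measurable_indicator_gradNormSq (hΩ : IsOpen Ω) (hu : ContDiffOn ℝ 1 u Ω) :
    Measurable (Ω.indicator (gradNormSq u)) := by
  have hfderiv : ContinuousOn (fderiv ℝ u) Ω := hu.continuousOn_fderiv_of_isOpen hΩ le_rfl
  have hcont : ContinuousOn (gradNormSq u) Ω :=
    ENNReal.continuous_ofReal.comp_continuousOn <|
      ((hfderiv.clm_apply continuousOn_const).norm.pow 2).add
        ((hfderiv.clm_apply continuousOn_const).norm.pow 2)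
  classical
  rw [← piecewise_eq_indicator]
  exact hcont.measurable_piecewise continuousOn_const hΩ.measurableSet

theorem norm_apply_sq_le_norm_sq_mul (L : ℂ →L[ℝ] E) (v : ℂ) :
    ‖L v‖ ^ 2 ≤ ‖v‖ ^ 2 * (‖L 1‖ ^ 2 + ‖L Complex.I‖ ^ 2) := by
  have hLv : L v = v.re • L 1 + v.im • L Complex.I := by
    rw [← map_smul, ← map_smul, ← map_add]
    congr 1
    apply Complex.ext <;> simp
  calc ‖L v‖ ^ 2 ≤ (|v.re| * ‖L 1‖ + |v.im| * ‖L Complex.I‖) ^ 2 := by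
        rw [hLv, ← norm_eq_abs, ← norm_eq_abs, ← norm_smul, ← norm_smul]
        gcongr
        exact norm_add_le _ _
    _ ≤ (|v.re| ^ 2 + |v.im| ^ 2) * (‖L 1‖ ^ 2 + ‖L Complex.I‖ ^ 2) := by
        linarith [sq_nonneg (|v.re| * ‖L Complex.I‖ - |v.im| * ‖L 1‖)]
    _ = ‖v‖ ^ 2 * (‖L 1‖ ^ 2 + ‖L Complex.I‖ ^ 2) := by
        rw [Complex.sq_norm, Complex.normSq_apply, sq_abs, sq_abs, sq, sq]

theorem enorm_deriv_comp_circleMap_sq_le {c : ℂ} {r θ : ℝ}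
    (hu : DifferentiableAt ℝ u (circleMap c r θ)) :
    ‖deriv (u ∘ circleMap c r) θ‖ₑ ^ 2
      ≤ ENNReal.ofReal (r ^ 2) * gradNormSq u (circleMap c r θ) := by
  rw [(hu.hasFDerivAt.comp_hasDerivAt θ (hasDerivAt_circleMap c r θ)).deriv, ← ofReal_norm,
    ← ENNReal.ofReal_pow (norm_nonneg _), gradNormSq, ← ENNReal.ofReal_mul (sq_nonneg r)]
  refine ENNReal.ofReal_le_ofReal ?_
  simpa using norm_apply_sq_le_norm_sq_mul (fderiv ℝ u (circleMap c r θ))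
    (circleMap 0 r θ * Complex.I)

theorem enorm_sub_sq_le_of_arc (hΩ : IsOpen Ω) (hu : ContDiffOn ℝ 1 u Ω) {c : ℂ} {r α β : ℝ}
    (hαβ : α ≤ β) (harc : MapsTo (circleMap c r) (Icc α β) Ω) :
    ‖u (circleMap c r β) - u (circleMap c r α)‖ₑ ^ 2 ≤ ENNReal.ofReal (β - α) *
      (ENNReal.ofReal (r ^ 2) * ∫⁻ θ in Icc α β, gradNormSq u (circleMap c r θ)) :=
  calc ‖u (circleMap c r β) - u (circleMap c r α)‖ₑ ^ 2
      ≤ ENNReal.ofReal (β - α) * ∫⁻ θ in Icc α β, ‖deriv (u ∘ circleMap c r) θ‖ₑ ^ 2 :=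
        enorm_sub_sq_le_mul_lintegral_deriv_sq
          (hu.comp (contDiff_circleMap c r).contDiffOn harc) hαβ
    _ ≤ ENNReal.ofReal (β - α) *
        ∫⁻ θ in Icc α β, ENNReal.ofReal (r ^ 2) * gradNormSq u (circleMap c r θ) := by
        gcongr ENNReal.ofReal (β - α) * ?_
        exact setLIntegral_mono' measurableSet_Icc fun θ hθ => enorm_deriv_comp_circleMap_sq_le <|
          (hu.differentiableOn one_ne_zero).differentiableAt (hΩ.mem_nhds (harc hθ))
    _ = ENNReal.ofReal (β - α) *
        (ENNReal.ofReal (r ^ 2) * ∫⁻ θ in Icc α β, gradNormSq u (circleMap c r θ)) := by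
        rw [lintegral_const_mul' _ _ ENNReal.ofReal_ne_top]

theorem exists_radius_lintegral_gradNormSq_le (hΩ : IsOpen Ω) (hu : ContDiffOn ℝ 1 u Ω) (c : ℂ)
    {a b : ℝ} (ha : 0 < a) (hab : a < b) :
    ∃ ρ ∈ Icc a b, ENNReal.ofReal (ρ ^ 2) *
        ∫⁻ θ in Ioc (-π) π, Ω.indicator (gradNormSq u) (circleMap c ρ θ)
      ≤ 2 * dirichletEnergy u Ω / ENNReal.ofReal (log (b / a)) := by
  set F := Ω.indicator (gradNormSq u)
  have hF : Measurable F := measurable_indicator_gradNormSq hΩ hu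
  have hG : Measurable fun r : ℝ => ∫⁻ θ in Ioc (-π) π, F (circleMap c r θ) :=
    Measurable.lintegral_prod_right' (f := fun q : ℝ × ℝ => F (circleMap c q.1 q.2))
      (by unfold circleMap; fun_prop)
  obtain ⟨ρ, hρ, hle⟩ := exists_sq_mul_le_setLIntegral_div_log hG.aemeasurable ha hab
  refine ⟨ρ, hρ, hle.trans ?_⟩
  gcongr
  calc ∫⁻ r in Icc a b, ENNReal.ofReal r * ∫⁻ θ in Ioc (-π) π, F (circleMap c r θ)
      ≤ ∫⁻ r in Ioi 0, ENNReal.ofReal r * ∫⁻ θ in Ioc (-π) π, F (circleMap c r θ) :=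
        lintegral_mono_set fun r hr => ha.trans_le hr.1
    _ = ∫⁻ z, F z := lintegral_circleMap_eq_lintegral hF c
    _ = 2 * dirichletEnergy u Ω := by
        rw [two_mul_dirichletEnergy, lintegral_indicator hΩ.measurableSet]

theorem exists_radius_enorm_sub_sq_le_of_arc (hΩ : IsOpen Ω) (hu : ContDiffOn ℝ 1 u Ω) (c : ℂ)
    {a b : ℝ} (ha : 0 < a) (hab : a < b) :
    ∃ ρ ∈ Icc a b, ∀ α β, |β - α| ≤ 2 * π → MapsTo (circleMap c ρ) (uIcc α β) Ω →
      ‖u (circleMap c ρ β) - u (circleMap c ρ α)‖ₑ ^ 2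
        ≤ ENNReal.ofReal (2 * π) * (2 * dirichletEnergy u Ω / ENNReal.ofReal (log (b / a))) := by
  obtain ⟨ρ, hρ, hle⟩ := exists_radius_lintegral_gradNormSq_le hΩ hu c ha hab
  refine ⟨ρ, hρ, fun α β hlen harc => ?_⟩
  wlog hαβ : α ≤ β generalizing α β
  · rw [enorm_sub_rev]
    exact this β α (abs_sub_comm α β ▸ hlen) (uIcc_comm α β ▸ harc) (le_of_not_ge hαβ)
  rw [abs_of_nonneg (sub_nonneg.2 hαβ)] at hlen
  rw [uIcc_of_le hαβ] at harc
  calc ‖u (circleMap c ρ β) - u (circleMap c ρ α)‖ₑ ^ 2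
      ≤ ENNReal.ofReal (β - α) *
        (ENNReal.ofReal (ρ ^ 2) * ∫⁻ θ in Icc α β, gradNormSq u (circleMap c ρ θ)) :=
        enorm_sub_sq_le_of_arc hΩ hu hαβ harc
    _ ≤ ENNReal.ofReal (2 * π) * (ENNReal.ofReal (ρ ^ 2) *
        ∫⁻ θ in Ioc (-π) π, Ω.indicator (gradNormSq u) (circleMap c ρ θ)) := by
        gcongr ENNReal.ofReal ?_ * (_ * ?_)
        exact setLIntegral_circleMap_Icc_le (sub_le_iff_le_add'.1 hlen) harc _
    _ ≤ ENNReal.ofReal (2 * π) * (2 * dirichletEnergy u Ω / ENNReal.ofReal (log (b / a))) := by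
        gcongr

theorem courant_lebesgue_general {c : ℂ} {R : ℝ} (hu : ContDiffOn ℝ 1 u (ball c R)) {C : NNReal}
    (henergy : dirichletEnergy u (ball c R) ≤ C) (z₀ : ℂ) {a b : ℝ} (ha : 0 < a) (hab : a < b) :
    ∃ ρ ∈ Icc a b, ∀ z ∈ ball c R, ∀ w ∈ ball c R, ‖z - z₀‖ = ρ → ‖w - z₀‖ = ρ →
      ‖u z - u w‖ ≤ √(4 * π * C / log (b / a)) := by
  obtain ⟨ρ, hρ, hosc⟩ := exists_radius_enorm_sub_sq_le_of_arc isOpen_ball hu z₀ ha hab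
  refine ⟨ρ, hρ, fun z hz w hw hzρ hwρ => ?_⟩
  obtain ⟨β, α, hlen, rfl, rfl, harc⟩ := exists_arc_mapsTo_ball hz hw hzρ hwρ
  have hlog : 0 < log (b / a) := log_pos ((one_lt_div ha).2 hab)
  refine le_sqrt_of_sq_le ((ENNReal.ofReal_le_ofReal_iff (by positivity)).1 ?_)
  calc ENNReal.ofReal (‖u (circleMap z₀ ρ β) - u (circleMap z₀ ρ α)‖ ^ 2)
      = ‖u (circleMap z₀ ρ β) - u (circleMap z₀ ρ α)‖ₑ ^ 2 := by
        rw [ENNReal.ofReal_pow (norm_nonneg _), ofReal_norm]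
    _ ≤ ENNReal.ofReal (2 * π) *
        (2 * dirichletEnergy u (ball c R) / ENNReal.ofReal (log (b / a))) :=
        hosc α β (abs_sub_comm α β ▸ hlen) (uIcc_comm α β ▸ harc)
    _ ≤ ENNReal.ofReal (2 * π) * (2 * C / ENNReal.ofReal (log (b / a))) := by gcongr
    _ = ENNReal.ofReal (4 * π * C / log (b / a)) := by
        rw [← ENNReal.ofReal_ofNat 2, ← ENNReal.ofReal_coe_nnreal, ← ENNReal.ofReal_mul two_pos.le,
          ← ENNReal.ofReal_div_of_pos hlog, ← ENNReal.ofReal_mul two_pi_pos.le]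
        ring_nf

end DirichletEnergy

theorem log_sqrt_div_self {x : ℝ} (hx : 0 ≤ x) : log (√x / x) = log (1 / x) / 2 := by
  rw [sqrt_div_self, log_inv, log_sqrt hx, one_div, log_inv, neg_div]

/-- Courant–Lebesgue lemma: for a `C¹` map `u` on the open unit disk with Dirichlet
energy at most `C` and a boundary point `z₀`, there is a good radius `ρ ∈ [δ, √δ]` on
which the oscillation of `u` along the circle of radius `ρ` about `z₀` is at most
`√(8πC / log(1/δ))`. -/
theorem courant_lebesgue
    (n : ℕ) (hn : 1 ≤ n) (C δ : ℝ) (hC : 0 < C) (hδ : δ ∈ Set.Ioo (0 : ℝ) 1)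
    (u : ℂ → EuclideanSpace ℝ (Fin n)) (hu : ContDiffOn ℝ 1 u (Metric.ball (0 : ℂ) 1))
    (henergy : (1 / 2 : ℝ≥0∞) * ∫⁻ z in Metric.ball (0 : ℂ) 1,
        ENNReal.ofReal (‖fderiv ℝ u z 1‖ ^ 2 + ‖fderiv ℝ u z Complex.I‖ ^ 2)
      ≤ ENNReal.ofReal C)
    (z₀ : ℂ) (hz₀ : z₀ ∈ Metric.sphere (0 : ℂ) 1) :
    ∃ ρ ∈ Set.Icc δ (Real.sqrt δ), ∀ z ∈ Metric.ball (0 : ℂ) 1, ∀ w ∈ Metric.ball (0 : ℂ) 1,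
      ‖z - z₀‖ = ρ → ‖w - z₀‖ = ρ →
      ‖u z - u w‖ ≤ Real.sqrt (8 * π * C / Real.log (1 / δ)) := by
  lift C to NNReal using hC.le
  rw [ENNReal.ofReal_coe_nnreal] at henergy
  have hbound : 8 * π * C / log (1 / δ) = 4 * π * C / log (√δ / δ) := by
    rw [log_sqrt_div_self hδ.1.le]
    ring
  exact hbound ▸ courant_lebesgue_general hu henergy z₀ hδ.1 (lt_sqrt_self_iff.2 ⟨hδ.1.ne', hδ.2⟩)
end
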